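/- arXiv:1509.02019 — 2 statements merged into one kernel-verified Lean document; each statement's English description precedes it below -/
import Mathlib

section
/- Let δ ∈ D be the multidiagonal of a copula on ℝ^d. If J(δ) = +∞, then H(C) = −∞ for every copula C with multidiagonal δ, i.e. max_{C ∈ C_δ} H(C) = −∞. -/
/-!
Let `C` be a probability measure on a cube `[a, b]^d` with density `c`, let `U ∼ C`, fix `p < q`,
and put `D(t) = δ_p(t) - δ_q(t) = P(U_(p) ≤ t < U_(q))`. Take a rate `h > 0` with `h * D ≤ 1` and an
antiderivative `H` of `h`. The Fenchel–Young inequality `c φ ≤ c log c + exp φ`, applied to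
`φ(u) = log h(u_(q)) - (H(u_(q)) - H(u_(p)))` and integrated over the cube, gives
`E[log h(U_(q))] ≤ E[H(U_(q)) - H(U_(p))] + ∫ (c log c)⁺ + ∫ exp φ`.

By Tonelli, `E[H(U_(q)) - H(U_(p))] = ∫ h * D ≤ b - a`. Moreover `exp φ(u) = h(t) exp (H(s) - H(t))`
at `s = u_(p)`, `t = u_(q)`, which for fixed `s` is a subprobability density in `t` on `[s, ∞)`;
summing over which coordinates realize `u_(p)` and `u_(q)` bounds `∫ exp φ` by a constant. Finally,
take `h = 1 / max(D, ε)` and let `ε` tend to `0`: if `∫ (c log c)⁺` is finite, then so is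
`E[-log D(U_(q))]`.
-/

/- Formalization framework for "Maximum entropy distribution of order statistics with given
marginals" (Butucea, Delmas, Dutfoy, Fischer).  One-dimensional cdfs are identified with
(probability) measures on `ℝ`, and cdfs on `ℝ^d` with measures on `Fin d → ℝ`. -/

open MeasureTheory Set
open scoped ENNReal

noncomputable section

namespace MaxEntOS

variable {d : ℕ}

/-- The cumulative distribution function of a measure on `ℝ`. -/
def cdf1 (ν : Measure ℝ) (t : ℝ) : ℝ := (ν (Iic t)).toReal

/-- The cdf extended to `EReal` arguments (so that `cdfE ν ⊥ = 0` and `cdfE ν ⊤ = ν ℝ`). -/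
def cdfE (ν : Measure ℝ) (x : EReal) : ℝ := (ν {s : ℝ | (s : EReal) ≤ x}).toReal

/-- The generalized inverse (quantile function) of the cdf of `ν`, real-valued. -/
def qReal (ν : Measure ℝ) (t : ℝ) : ℝ := sInf {s : ℝ | t ≤ cdf1 ν s}

/-- The generalized inverse of a nondecreasing function `g : ℝ → ℝ`, `EReal`-valued, with the
conventions `inf ∅ = ⊤` and `inf ℝ = ⊥`. -/
def qInvE (g : ℝ → ℝ) (t : ℝ) : EReal := sInf ((fun s : ℝ => (s : EReal)) '' {s : ℝ | t ≤ g s})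

open scoped Classical in
/-- The differential entropy (with respect to Lebesgue measure) of a measure, with values in
`EReal` : it equals `⊥` if the measure is not absolutely continuous, and otherwise it is
`−∫ f log f`, computed as the difference of the lower integrals of the negative and positive
parts of `f log f`, where `f` is the density. -/
def dEntropy {α : Type*} [MeasureSpace α] (μ : Measure α) : EReal :=
  if μ ≪ (volume : Measure α) then
    ((∫⁻ x, ENNReal.ofReal
        (-((μ.rnDeriv volume x).toReal * Real.log ((μ.rnDeriv volume x).toReal))) : ℝ≥0∞) : EReal)
      - ((∫⁻ x, ENNReal.ofReal
        ((μ.rnDeriv volume x).toReal * Real.log ((μ.rnDeriv volume x).toReal)) : ℝ≥0∞) : EReal)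
  else ⊥

/-- The nondecreasing rearrangement (order statistics) of a tuple. -/
def orderStat (x : Fin d → ℝ) : Fin d → ℝ := fun i => x (Tuple.sort x i)

/-- The `i`-th one-dimensional marginal of a measure on `ℝ^d`. -/
def marg (μ : Measure (Fin d → ℝ)) (i : Fin d) : Measure ℝ := μ.map fun x => x i

/-- The multidiagonal of a measure on `ℝ^d` : the tuple of one-dimensional marginals of the
order statistics. -/
def multidiag (μ : Measure (Fin d → ℝ)) (i : Fin d) : Measure ℝ := μ.map fun x => orderStat x i

/-- The uniform distribution on `[0,1]`. -/
def uniform01 : Measure ℝ := (volume : Measure ℝ).restrict (Icc 0 1)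

/-- A copula : a probability measure on `ℝ^d` whose one-dimensional marginals are all uniform
on `[0,1]`. -/
def IsCopula (μ : Measure (Fin d → ℝ)) : Prop :=
  IsProbabilityMeasure μ ∧ ∀ i, marg μ i = uniform01

/-- A measure on `ℝ^d` is symmetric (exchangeable) if it is invariant under permutations of the
coordinates. -/
def IsSymmetric (μ : Measure (Fin d → ℝ)) : Prop :=
  ∀ π : Equiv.Perm (Fin d), μ.map (fun x => fun i => x (π i)) = μ

/-- `δ` belongs to `D` : it is the multidiagonal of some copula. -/
def IsMultidiag (δ : Fin d → Measure ℝ) : Prop :=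
  ∃ μ : Measure (Fin d → ℝ), IsCopula μ ∧ multidiag μ = δ

/-- `δ` belongs to `D^0` : it is the multidiagonal of some absolutely continuous copula. -/
def IsMultidiag0 (δ : Fin d → Measure ℝ) : Prop :=
  ∃ μ : Measure (Fin d → ℝ), IsCopula μ ∧ μ ≪ (volume : Measure (Fin d → ℝ)) ∧ multidiag μ = δ

/-- `F ∈ F_d` : `F` is a `d`-tuple of continuous one-dimensional cdfs (identified with atomless
probability measures on `ℝ`) which are stochastically ordered : `F (i-1) ≥ F i` pointwise. -/
structure IsMargOS [NeZero d] (F : Fin d → Measure ℝ) : Prop where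
  prob : ∀ i, IsProbabilityMeasure (F i)
  cont : ∀ i, ∀ t : ℝ, F i {t} = 0
  ord : ∀ i : Fin d, i ≠ 0 → ∀ t : ℝ, cdf1 (F i) t ≤ cdf1 (F (i - 1)) t

/-- `μ ∈ L^OS_d(F)` : `μ` is the distribution of a `d`-dimensional order statistic (an almost
surely nondecreasing random vector) with one-dimensional marginals `F`. -/
def IsCdfOS (F : Fin d → Measure ℝ) (μ : Measure (Fin d → ℝ)) : Prop :=
  IsProbabilityMeasure μ ∧ μ {x | Monotone x} = 1 ∧ ∀ i, marg μ i = F i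

/-- `F ∈ F_d^0` : there exists an absolutely continuous distribution of order statistics with
one-dimensional marginals `F`. -/
def IsMargOS0 [NeZero d] (F : Fin d → Measure ℝ) : Prop :=
  IsMargOS F ∧ ∃ μ : Measure (Fin d → ℝ), IsCdfOS F μ ∧ μ ≪ (volume : Measure (Fin d → ℝ))

/-- The functional `J(F) = ∑_{i=2}^d ∫ |log (F_{i-1}(t) − F_i(t))| dF_i(t) ∈ [0,∞]`. -/
def Jfun [NeZero d] (F : Fin d → Measure ℝ) : ℝ≥0∞ :=
  ∑ i : Fin d, if i = 0 then 0 else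
    ∫⁻ t, ENNReal.ofReal |Real.log (cdf1 (F (i - 1)) t - cdf1 (F i) t)| ∂(F i)

/-- The copula of a measure on `ℝ^d` (for continuous marginals this is the unique copula
provided by Sklar's theorem) : the law of `(F_1(X_1), …, F_d(X_d))`. -/
def copulaOf (μ : Measure (Fin d → ℝ)) : Measure (Fin d → ℝ) :=
  μ.map fun x => fun i => cdf1 (marg μ i) (x i)

/-- The set `C^{OS}(F)` of copulas of distributions of order statistics with marginal
cdfs `F`. -/
def copulaOS (F : Fin d → Measure ℝ) : Set (Measure (Fin d → ℝ)) :=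
  {C | ∃ μ, IsCdfOS F μ ∧ copulaOf μ = C}

/-- The joint distribution with one-dimensional marginals `F` and copula `C` : the law of
`(F_1^{-1}(U_1), …, F_d^{-1}(U_d))` where `U ∼ C`. -/
def joinCopula (F : Fin d → Measure ℝ) (C : Measure (Fin d → ℝ)) : Measure (Fin d → ℝ) :=
  C.map fun u => fun i => qReal (F i) (u i)

/-- The law of `X_Π`, where `X ∼ μ` and `Π` is an independent uniform random permutation of
`{1, …, d}`. -/
def symmetrize (μ : Measure (Fin d → ℝ)) : Measure (Fin d → ℝ) :=
  (d.factorial : ℝ≥0∞)⁻¹ • ∑ π : Equiv.Perm (Fin d), μ.map (fun x => fun i => x (π i))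

/-- The symmetrizing operator `S_F` on copulas : `S_F(C)` is the copula of `X_Π` where `X` has
one-dimensional marginals `F` and copula `C`, and `Π` is an independent uniform random
permutation. -/
def SF (F : Fin d → Measure ℝ) (C : Measure (Fin d → ℝ)) : Measure (Fin d → ℝ) :=
  copulaOf (symmetrize (joinCopula F C))

/-- The average cdf `G = (1/d) ∑_{i=1}^d F_i`. -/
def Gbar (F : Fin d → Measure ℝ) (t : ℝ) : ℝ := (∑ i, cdf1 (F i) t) / d

/-- `G` extended to `EReal` arguments (`GbarE F ⊥ = 0` and `GbarE F ⊤ = 1` for probability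
measures). -/
def GbarE (F : Fin d → Measure ℝ) (x : EReal) : ℝ := (∑ i, cdfE (F i) x) / d

/-- The multidiagonal `δ^F` associated to the marginals `F`, as a tuple of measures : the law
of `G(X_i)` where `X_i ∼ F_i`, whose cdf is `F_i ∘ G^{-1}`. -/
def mdiagF (F : Fin d → Measure ℝ) (i : Fin d) : Measure ℝ := (F i).map (Gbar F)

/-- `C` is a copula of the measure `ν` on `ℝ^d` : `C` is a copula and `ν` is the joint
distribution with the marginals of `ν` and copula `C`. -/
def IsCopulaOf (C ν : Measure (Fin d → ℝ)) : Prop :=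
  IsCopula C ∧ ν = joinCopula (marg ν) C

/-- The extended tuple of multidiagonal cdfs, with the conventions `δ_(0) = 1` and
`δ_(d+1) = 0`; the natural index `i ∈ {1, …, d}` corresponds to `δ_(i)`. -/
def dcdf (δ : Fin d → Measure ℝ) (i : ℕ) (t : ℝ) : ℝ :=
  if h0 : i = 0 then 1
  else if h : i ≤ d then cdf1 (δ ⟨i - 1, by omega⟩) t
  else 0

/-- The open set `Ψ^δ_i = {t ∈ (0,1) : δ_(i-1)(t) > δ_(i)(t)}`, for `1 ≤ i ≤ d+1`
(with the conventions `δ_(0) = 1` and `δ_(d+1) = 0`). -/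
def Psi (δ : Fin d → Measure ℝ) (i : ℕ) : Set ℝ :=
  Ioo 0 1 ∩ {t | dcdf δ i t < dcdf δ (i - 1) t}

/-- Left endpoint of the connected component of `U` containing `t`. -/
def lend (U : Set ℝ) (t : ℝ) : ℝ := sSup {s | s ≤ t ∧ s ∉ U}

/-- Right endpoint of the connected component of `U` containing `t`. -/
def rend (U : Set ℝ) (t : ℝ) : ℝ := sInf {s | t ≤ s ∧ s ∉ U}

/-- Midpoint `m_i^{(j)}` of the connected component of `U` containing `t`. -/
def midpt (U : Set ℝ) (t : ℝ) : ℝ := (lend U t + rend U t) / 2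

/-- The integrand `δ'_(i)(s) / (δ_(i-1)(s) − δ_(i)(s))` (that is, `K'_i`). -/
def kInt (δ : Fin d → Measure ℝ) (i : ℕ) (s : ℝ) : ℝ :=
  deriv (dcdf δ i) s / (dcdf δ (i - 1) s - dcdf δ i s)

/-- `K_i(t)`, integrating `K'_i` from the midpoint of the connected component of `Ψ^δ_i`
containing `t` (note `K_{d+1} = 0` holds automatically, `δ_(d+1)` being constant). -/
def Kfun (δ : Fin d → Measure ℝ) (i : ℕ) (t : ℝ) : ℝ :=
  ∫ s in (midpt (Psi δ i) t)..t, kInt δ i s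

/-- The function `a_i(t) = K'_i(t) e^{K_{i+1}(t) − K_i(t)} 1_{Ψ^δ_i ∩ Ψ^δ_{i+1}}(t)`. -/
def aFun (δ : Fin d → Measure ℝ) (i : ℕ) : ℝ → ℝ :=
  (Psi δ i ∩ Psi δ (i + 1)).indicator fun t =>
    kInt δ i t * Real.exp (Kfun δ (i + 1) t - Kfun δ i t)

/-- The set `L_δ` of `u ∈ [0,1]^d` such that `(u_(i-1), u_(i)) ⊆ Ψ^δ_i` for all `2 ≤ i ≤ d`. -/
def Lset [NeZero d] (δ : Fin d → Measure ℝ) : Set (Fin d → ℝ) :=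
  {u | (∀ j, u j ∈ Icc (0 : ℝ) 1) ∧
    ∀ i : Fin d, i ≠ 0 → Ioo (orderStat u (i - 1)) (orderStat u i) ⊆ Psi δ (i.val + 1)}

/-- The density `c_δ(u) = (1/d!) 1_{L_δ}(u) ∏_{i=1}^d a_i(u_(i))` of the maximum entropy copula
with multidiagonal `δ`. -/
def cDelta [NeZero d] (δ : Fin d → Measure ℝ) : (Fin d → ℝ) → ℝ :=
  (Lset δ).indicator fun u =>
    (d.factorial : ℝ)⁻¹ * ∏ i : Fin d, aFun δ (i.val + 1) (orderStat u i)

/-- The maximum entropy copula `C_δ` with multidiagonal `δ` : the measure with density `c_δ`. -/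
def CDelta [NeZero d] (δ : Fin d → Measure ℝ) : Measure (Fin d → ℝ) :=
  (volume : Measure (Fin d → ℝ)).withDensity fun u => ENNReal.ofReal (cDelta δ u)

/-- The density of a one-dimensional measure `ν` with respect to Lebesgue measure. -/
def densOf (ν : Measure ℝ) (t : ℝ) : ℝ := (ν.rnDeriv volume t).toReal

/-- The function `ℓ_i(t) = f_i(t) / (F_{i-1}(t) − F_i(t))`. -/
def ellF [NeZero d] (F : Fin d → Measure ℝ) (i : Fin d) (t : ℝ) : ℝ :=
  densOf (F i) t / (cdf1 (F (i - 1)) t - cdf1 (F i) t)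

/-- The set `L^F` of ordered vectors `x ∈ ℝ^d` such that `F_{i-1}(t) > F_i(t)` for all
`t ∈ (x_{i-1}, x_i)` and all `2 ≤ i ≤ d`. -/
def LsetF [NeZero d] (F : Fin d → Measure ℝ) : Set (Fin d → ℝ) :=
  {x | Monotone x ∧ ∀ i : Fin d, i ≠ 0 →
    ∀ t ∈ Ioo (x (i - 1)) (x i), cdf1 (F i) t < cdf1 (F (i - 1)) t}

/-- The density `f_F` of the maximum entropy distribution of order statistics with marginal
cdfs `F` :
`f_F(x) = f_1(x_1) ∏_{i=2}^d ℓ_i(x_i) exp(−∫_{x_{i-1}}^{x_i} ℓ_i(s) ds) 1_{L^F}(x)`. -/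
def fF [NeZero d] (F : Fin d → Measure ℝ) : (Fin d → ℝ) → ℝ :=
  (LsetF F).indicator fun x =>
    densOf (F 0) (x 0) *
      ∏ i ∈ Finset.univ.erase (0 : Fin d),
        ellF F i (x i) * Real.exp (-∫ s in (x (i - 1))..(x i), ellF F i s)

open Filter

/-! ### Order statistics -/

lemma fin_sub_one_lt_self [NeZero d] {i : Fin d} (hi : i ≠ 0) : i - 1 < i := by
  obtain ⟨n, rfl⟩ := Nat.exists_eq_succ_of_ne_zero (NeZero.ne d)
  exact Fin.sub_one_lt_iff.2 (Fin.pos_iff_ne_zero.2 hi)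

lemma monotone_orderStat (u : Fin d → ℝ) : Monotone (orderStat u) := Tuple.monotone_sort u

lemma orderStat_le_iff_lt_card (u : Fin d → ℝ) (i : Fin d) (t : ℝ) :
    orderStat u i ≤ t ↔ (i : ℕ) < Finset.card {j | u j ≤ t} := by
  rw [← Tuple.lt_card_le_iff_apply_le_of_monotone (monotone_orderStat u)]
  have hcard : Finset.card {j | orderStat u j ≤ t} = Finset.card {j | u j ≤ t} :=
    Finset.card_equiv (Tuple.sort u) fun j => by
      rw [Finset.mem_filter_univ, Finset.mem_filter_univ, orderStat]
  rw [hcard]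

lemma measurable_orderStat (i : Fin d) : Measurable fun u : Fin d → ℝ => orderStat u i := by
  refine measurable_of_Iic fun t => ?_
  have hcount : Measurable fun u : Fin d → ℝ => Finset.card {j | u j ≤ t} := by
    simp only [Finset.card_filter]
    exact Finset.measurable_sum _ fun j _ =>
      Measurable.ite (measurableSet_le (measurable_pi_apply j) measurable_const)
        measurable_const measurable_const
  have hpre : (fun u : Fin d → ℝ => orderStat u i) ⁻¹' Iic t =
      (fun u : Fin d → ℝ => Finset.card {j | u j ≤ t}) ⁻¹' Ioi (i : ℕ) := by
    ext u
    exact orderStat_le_iff_lt_card u i t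
  rw [hpre]
  exact hcount measurableSet_Ioi

lemma comp_orderStat_pair_le_sum {p q : Fin d} (hpq : p ≠ q) (g : ℝ × ℝ → ℝ≥0∞)
    (u : Fin d → ℝ) :
    g (orderStat u p, orderStat u q) ≤ ∑ jk ∈ Finset.univ.offDiag, g (u jk.1, u jk.2) := by
  have hmem : (Tuple.sort u p, Tuple.sort u q) ∈ (Finset.univ : Finset (Fin d)).offDiag := by
    simp [hpq]
  exact Finset.single_le_sum (f := fun jk : Fin d × Fin d => g (u jk.1, u jk.2))
    (fun _ _ => zero_le) hmem

lemma lintegral_pi_pair_le {α : Type*} [MeasurableSpace α] {μ : Measure α} [SigmaFinite μ]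
    {j k : Fin d} (hjk : j ≠ k) {g : α × α → ℝ≥0∞} (hg : Measurable g) {c : ℝ≥0∞}
    (hc : ∀ s, ∫⁻ t, g (s, t) ∂μ ≤ c) :
    ∫⁻ u, g (u j, u k) ∂(Measure.pi fun _ : Fin d => μ) ≤ c * μ univ ^ (d - 1) := by
  cases d with
  | zero => exact j.elim0
  | succ n =>
    obtain ⟨l, rfl⟩ := Fin.exists_succAbove_eq hjk
    have hpres := measurePreserving_piFinSuccAbove (fun _ : Fin (n + 1) => μ) k
    calc ∫⁻ u, g (u (k.succAbove l), u k) ∂(Measure.pi fun _ : Fin (n + 1) => μ)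
        = ∫⁻ z, g (z.2 l, z.1) ∂(μ.prod (Measure.pi fun _ : Fin n => μ)) :=
          hpres.lintegral_comp (f := fun z => g (z.2 l, z.1)) (by fun_prop)
      _ = ∫⁻ v, ∫⁻ t, g (v l, t) ∂μ ∂(Measure.pi fun _ : Fin n => μ) :=
          lintegral_prod_symm' _ (by fun_prop)
      _ ≤ ∫⁻ _, c ∂(Measure.pi fun _ : Fin n => μ) := lintegral_mono fun v => hc (v l)
      _ = c * μ univ ^ (n + 1 - 1) := by simp [Measure.pi_univ]

lemma lintegral_pi_orderStat_pair_le {μ : Measure ℝ} [SigmaFinite μ] {p q : Fin d} (hpq : p ≠ q)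
    {g : ℝ × ℝ → ℝ≥0∞} (hg : Measurable g) {c : ℝ≥0∞} (hc : ∀ s, ∫⁻ t, g (s, t) ∂μ ≤ c) :
    ∫⁻ u, g (orderStat u p, orderStat u q) ∂(Measure.pi fun _ : Fin d => μ) ≤
      (d * d - d : ℕ) * (c * μ univ ^ (d - 1)) :=
  calc ∫⁻ u, g (orderStat u p, orderStat u q) ∂(Measure.pi fun _ : Fin d => μ)
      ≤ ∫⁻ u, ∑ jk ∈ Finset.univ.offDiag, g (u jk.1, u jk.2) ∂(Measure.pi fun _ : Fin d => μ) :=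
        lintegral_mono fun u => comp_orderStat_pair_le_sum hpq g u
    _ = ∑ jk ∈ Finset.univ.offDiag,
          ∫⁻ u, g (u jk.1, u jk.2) ∂(Measure.pi fun _ : Fin d => μ) :=
        lintegral_finsetSum _ fun _ _ => by fun_prop
    _ ≤ ∑ _jk ∈ (Finset.univ : Finset (Fin d)).offDiag, c * μ univ ^ (d - 1) :=
        Finset.sum_le_sum fun _ hjk =>
          lintegral_pi_pair_le (Finset.mem_offDiag.1 hjk).2.2 hg hc
    _ = (d * d - d : ℕ) * (c * μ univ ^ (d - 1)) := by
        rw [Finset.sum_const, Finset.offDiag_card, Finset.card_fin, nsmul_eq_mul]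

/-! ### The cdfs of order statistics -/

lemma nullSingletonClass_multidiag {C : Measure (Fin d → ℝ)} (hac : C ≪ volume) (i : Fin d) :
    NullSingletonClass (multidiag C i) := by
  refine ⟨fun t => ?_⟩
  rw [multidiag, Measure.map_apply (measurable_orderStat i) (measurableSet_singleton t)]
  refine measure_mono_null (t := ⋃ j, {u : Fin d → ℝ | u j = t})
    (fun u hu => mem_iUnion.2 ⟨Tuple.sort u i, hu⟩) (measure_iUnion_null fun j => hac ?_)
  rw [volume_pi]
  exact Measure.pi_hyperplane (fun _ : Fin d => (volume : Measure ℝ)) j t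

lemma continuous_cdf1 (ν : Measure ℝ) [IsProbabilityMeasure ν] [NullSingletonClass ν] :
    Continuous (cdf1 ν) := by
  have hcdf : cdf1 ν = ProbabilityTheory.cdf ν :=
    funext fun t => (ProbabilityTheory.cdf_eq_real ν t).symm
  rw [hcdf, continuous_iff_continuousAt]
  intro t
  have hmono : Monotone (ProbabilityTheory.cdf ν) := ProbabilityTheory.monotone_cdf ν
  have hjump := (ProbabilityTheory.cdf ν).measure_singleton t
  rw [ProbabilityTheory.measure_cdf, measure_singleton, eq_comm, ENNReal.ofReal_eq_zero,
    sub_nonpos] at hjump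
  rw [hmono.continuousAt_iff_leftLim_eq_rightLim, StieltjesFunction.rightLim_eq]
  exact (hmono.leftLim_le le_rfl).antisymm hjump

instance isProbabilityMeasure_multidiag (C : Measure (Fin d → ℝ)) [IsProbabilityMeasure C]
    (i : Fin d) : IsProbabilityMeasure (multidiag C i) :=
  Measure.isProbabilityMeasure_map (measurable_orderStat i).aemeasurable

lemma continuous_cdf1_multidiag {C : Measure (Fin d → ℝ)} [IsProbabilityMeasure C]
    (hac : C ≪ volume) (i : Fin d) : Continuous (cdf1 (multidiag C i)) :=
  have := nullSingletonClass_multidiag hac i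
  continuous_cdf1 _

lemma cdf1_multidiag_sub {C : Measure (Fin d → ℝ)} [IsFiniteMeasure C] {p q : Fin d}
    (hpq : p ≤ q) (t : ℝ) :
    cdf1 (multidiag C p) t - cdf1 (multidiag C q) t =
      C.real {u | t ∈ Ico (orderStat u p) (orderStat u q)} := by
  have hcdf (i : Fin d) : cdf1 (multidiag C i) t = C.real {u | orderStat u i ≤ t} :=
    map_measureReal_apply (measurable_orderStat i) measurableSet_Iic
  have hsub : {u : Fin d → ℝ | orderStat u q ≤ t} ⊆ {u | orderStat u p ≤ t} :=
    fun u hu => (monotone_orderStat u hpq).trans hu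
  rw [hcdf, hcdf, ← measureReal_sdiff hsub (measurable_orderStat q measurableSet_Iic)]
  congr 1
  ext u
  simp

/-! ### Rates and their antiderivatives -/

lemma measurable_of_forall_hasDerivAt {H h : ℝ → ℝ} (hH : ∀ t, HasDerivAt H (h t) t) :
    Measurable h := by
  rw [← funext fun t => (hH t).deriv]
  exact measurable_deriv H

lemma continuous_of_forall_hasDerivAt {H h : ℝ → ℝ} (hH : ∀ t, HasDerivAt H (h t) t) :
    Continuous H :=
  continuous_iff_continuousAt.2 fun t => (hH t).continuousAt

section Antiderivative

variable {H h : ℝ → ℝ} (hH : ∀ t, HasDerivAt H (h t) t) (hnonneg : ∀ t, 0 ≤ h t)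
include hH hnonneg

lemma lintegral_Ico_ofReal_deriv {x y : ℝ} (hxy : x ≤ y) :
    ∫⁻ t in Ico x y, ENNReal.ofReal (h t) = ENNReal.ofReal (H y - H x) := by
  have hmono : MonotoneOn H (Icc x y) := (monotone_of_hasDerivAt_nonneg hH hnonneg).monotoneOn _
  rw [restrict_Ico_eq_restrict_Icc,
    lintegral_deriv_eq_volume_image_of_monotoneOn measurableSet_Icc
      (fun t _ => (hH t).hasDerivWithinAt) hmono,
    (continuous_of_forall_hasDerivAt hH).continuousOn.image_Icc_of_monotoneOn hxy hmono,
    Real.volume_Icc]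

/-- The integrand is minus the derivative of the survival function `t ↦ exp (H s - H t)`, which
decreases from `1` at `s`. -/
lemma lintegral_Ici_hazard_le_one (s : ℝ) :
    ∫⁻ t in Ici s, ENNReal.ofReal (h t * Real.exp (H s - H t)) ≤ 1 := by
  have hderiv (t : ℝ) :
      HasDerivAt (fun t => -Real.exp (H s - H t)) (h t * Real.exp (H s - H t)) t := by
    simpa [mul_comm] using ((hH t).const_sub (H s)).exp.fun_neg
  have hmono : Monotone fun t => -Real.exp (H s - H t) :=
    monotone_of_hasDerivAt_nonneg hderiv fun t => mul_nonneg (hnonneg t) (Real.exp_pos _).le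
  have himage : (fun t => -Real.exp (H s - H t)) '' Ici s ⊆ Icc (-1) 0 := by
    rintro _ ⟨t, ht, rfl⟩
    exact ⟨by simpa using hmono ht, neg_nonpos.2 (Real.exp_pos _).le⟩
  rw [lintegral_deriv_eq_volume_image_of_monotoneOn measurableSet_Ici
    (fun t _ => (hderiv t).hasDerivWithinAt) (hmono.monotoneOn _)]
  exact (measure_mono himage).trans_eq (by simp)

end Antiderivative

lemma lintegral_setLIntegral_Ico {Ω : Type*} [MeasurableSpace Ω] {P : Measure Ω} [SFinite P]
    {X Y : Ω → ℝ} (hX : Measurable X) (hY : Measurable Y) {ν : Measure ℝ} [SFinite ν]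
    {g : ℝ → ℝ≥0∞} (hg : Measurable g) :
    ∫⁻ ω, ∫⁻ t in Ico (X ω) (Y ω), g t ∂ν ∂P =
      ∫⁻ t, g t * P {ω | t ∈ Ico (X ω) (Y ω)} ∂ν := by
  set S : Set (Ω × ℝ) := {z | z.2 ∈ Ico (X z.1) (Y z.1)}
  have hSm : MeasurableSet S :=
    (measurableSet_le (hX.comp measurable_fst) measurable_snd).inter
      (measurableSet_lt measurable_snd (hY.comp measurable_fst))
  calc ∫⁻ ω, ∫⁻ t in Ico (X ω) (Y ω), g t ∂ν ∂P
      = ∫⁻ ω, ∫⁻ t, S.indicator (fun z => g z.2) (ω, t) ∂ν ∂P :=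
        lintegral_congr fun ω => (lintegral_indicator measurableSet_Ico g).symm
    _ = ∫⁻ t, ∫⁻ ω, S.indicator (fun z => g z.2) (ω, t) ∂P ∂ν :=
        lintegral_lintegral_swap ((hg.comp measurable_snd).indicator hSm).aemeasurable
    _ = ∫⁻ t, g t * P {ω | t ∈ Ico (X ω) (Y ω)} ∂ν :=
        lintegral_congr fun t => lintegral_indicator_const (measurable_prodMk_right hSm) (g t)

/-! ### The entropy inequality -/

/-- The integral `∫ (f log f)⁺` of the density `f` of `μ`, that is, the negative part of the entropy
`-∫ f log f`. -/
def entropyNegPart {α : Type*} [MeasureSpace α] (μ : Measure α) : ℝ≥0∞ :=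
  ∫⁻ x, ENNReal.ofReal ((μ.rnDeriv volume x).toReal * Real.log ((μ.rnDeriv volume x).toReal))

lemma dEntropy_eq_bot_of_entropyNegPart_eq_top {α : Type*} [MeasureSpace α] {μ : Measure α}
    (hμ : entropyNegPart μ = ∞) : dEntropy μ = ⊥ := by
  unfold dEntropy
  split_ifs with hac
  · unfold entropyNegPart at hμ
    rw [hμ, EReal.coe_ennreal_top, EReal.sub_top]
  · rfl

/-- A weakened Fenchel–Young inequality: `exp` is the conjugate of `x log x - x`, and the term
`-x ≤ 0` is dropped. -/
lemma mul_le_mul_log_add_exp {x : ℝ} (hx : 0 ≤ x) (y : ℝ) :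
    x * y ≤ x * Real.log x + Real.exp y := by
  rcases hx.eq_or_lt with rfl | hx
  · simp [(Real.exp_pos y).le]
  · have h := Real.add_one_le_exp (y - Real.log x)
    rw [Real.exp_sub, Real.exp_log hx, le_div_iff₀ hx] at h
    nlinarith

/-- The previous inequality at `y = a - b`, with `x * b` moved to the right so that every term lies
in `ℝ≥0∞` and no integrability question arises. -/
lemma mul_ofReal_le_add_mul_log_add_exp {x : ℝ≥0∞} (hx : x ≠ ∞) (a b : ℝ) :
    x * ENNReal.ofReal a ≤ x * ENNReal.ofReal b
      + ENNReal.ofReal (x.toReal * Real.log x.toReal) + ENNReal.ofReal (Real.exp (a - b)) := by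
  lift x to NNReal using hx
  have h := mul_le_mul_log_add_exp x.coe_nonneg (a - b)
  rw [ENNReal.coe_toReal, ← ENNReal.ofReal_coe_nnreal, ← ENNReal.ofReal_mul x.coe_nonneg,
    ← ENNReal.ofReal_mul x.coe_nonneg]
  calc ENNReal.ofReal (x * a)
      ≤ ENNReal.ofReal (x * b + x * Real.log x + Real.exp (a - b)) :=
        ENNReal.ofReal_le_ofReal (by linarith)
    _ ≤ _ := ENNReal.ofReal_add_le.trans (add_le_add_left ENNReal.ofReal_add_le _)

lemma lintegral_ofReal_le_add_entropyNegPart {α : Type*} [MeasureSpace α]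
    [SigmaFinite (volume : Measure α)] {C : Measure α} [SigmaFinite C] (hac : C ≪ volume)
    {S : Set α} (hS : MeasurableSet S) (hCS : ∀ᵐ x ∂C, x ∈ S) {A B : α → ℝ} (hA : Measurable A)
    (hB : Measurable B) :
    ∫⁻ x, ENNReal.ofReal (A x) ∂C ≤ ∫⁻ x, ENNReal.ofReal (B x) ∂C + entropyNegPart C
      + ∫⁻ x in S, ENNReal.ofReal (Real.exp (A x - B x)) := by
  set c := C.rnDeriv volume
  have hdensity {f : α → ℝ} (hf : Measurable f) :
      ∫⁻ x in S, c x * ENNReal.ofReal (f x) = ∫⁻ x, ENNReal.ofReal (f x) ∂C := by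
    rw [setLIntegral_rnDeriv_mul hac hf.ennreal_ofReal.aemeasurable hS,
      Measure.restrict_eq_self_of_ae_mem hCS]
  rw [← hdensity hA, ← hdensity hB]
  calc ∫⁻ x in S, c x * ENNReal.ofReal (A x)
      ≤ ∫⁻ x in S, (c x * ENNReal.ofReal (B x)
          + ENNReal.ofReal ((c x).toReal * Real.log (c x).toReal)
          + ENNReal.ofReal (Real.exp (A x - B x))) := by
        refine lintegral_mono_ae ?_
        filter_upwards [ae_restrict_of_ae (Measure.rnDeriv_lt_top C volume)] with x hx
        exact mul_ofReal_le_add_mul_log_add_exp hx.ne _ _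
    _ = (∫⁻ x in S, c x * ENNReal.ofReal (B x))
          + (∫⁻ x in S, ENNReal.ofReal ((c x).toReal * Real.log (c x).toReal))
          + ∫⁻ x in S, ENNReal.ofReal (Real.exp (A x - B x)) := by
        rw [lintegral_add_right _ (by fun_prop),
          lintegral_add_left ((Measure.measurable_rnDeriv _ _).fun_mul hB.ennreal_ofReal)]
    _ ≤ _ := by
        gcongr
        exact setLIntegral_le_lintegral _ _

/-! ### Removing the truncation -/

/-- The zeros of `f` do not contribute to the left-hand side, since `Real.log 0 = 0`. -/
lemma lintegral_abs_log_le_of_forall_max {α : Type*} [MeasurableSpace α] {μ : Measure α}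
    {f : α → ℝ} (hf : Measurable f) (hf01 : ∀ x, f x ∈ Icc 0 1) {K : ℝ≥0∞}
    (hK : ∀ ε > 0, ∫⁻ x, ENNReal.ofReal (Real.log (max (f x) ε)⁻¹) ∂μ ≤ K) :
    ∫⁻ x, ENNReal.ofReal |Real.log (f x)| ∂μ ≤ K := by
  set ε : ℕ → ℝ := fun n => 1 / ((n : ℝ) + 1)
  set F : ℕ → α → ℝ≥0∞ := fun n x => ENNReal.ofReal (Real.log (max (f x) (ε n))⁻¹)
  have hle_liminf (x : α) : ENNReal.ofReal |Real.log (f x)| ≤ liminf (fun n => F n x) atTop := by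
    obtain ⟨h0, h1⟩ := hf01 x
    rcases h0.eq_or_lt with hzero | hpos
    · simp [← hzero]
    · refine le_liminf_of_le (by isBoundedDefault) ?_
      filter_upwards [tendsto_one_div_add_atTop_nhds_zero_nat.eventually_lt_const hpos] with n hn
      rw [show F n x = ENNReal.ofReal (Real.log (f x)⁻¹) by rw [← max_eq_left hn.le],
        Real.log_inv, abs_of_nonpos (Real.log_nonpos h0 h1)]
  calc ∫⁻ x, ENNReal.ofReal |Real.log (f x)| ∂μ
      ≤ ∫⁻ x, liminf (fun n => F n x) atTop ∂μ := lintegral_mono hle_liminf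
    _ ≤ liminf (fun n => ∫⁻ x, F n x ∂μ) atTop := lintegral_liminf_le fun n => by fun_prop
    _ ≤ liminf (fun _ : ℕ => K) atTop :=
        liminf_le_liminf (Eventually.of_forall fun n => hK (ε n) Nat.one_div_pos_of_nat)
    _ = K := liminf_const K

/-! ### Measures on a cube -/

section Cube

variable {a b : ℝ}

lemma lintegral_cube_hazard_orderStat_le {p q : Fin d} (hpq : p < q) {H h : ℝ → ℝ}
    (hH : ∀ t, HasDerivAt H (h t) t) (hnonneg : ∀ t, 0 ≤ h t) :
    ∫⁻ u in univ.pi fun _ : Fin d => Icc a b, ENNReal.ofReal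
        (h (orderStat u q) * Real.exp (H (orderStat u p) - H (orderStat u q))) ≤
      (d * d - d : ℕ) * ENNReal.ofReal (b - a) ^ (d - 1) := by
  set g : ℝ × ℝ → ℝ≥0∞ := {z : ℝ × ℝ | z.1 ≤ z.2}.indicator
    fun z => ENNReal.ofReal (h z.2 * Real.exp (H z.1 - H z.2))
  have hgm : Measurable g := by
    have := measurable_of_forall_hasDerivAt hH
    have := (continuous_of_forall_hasDerivAt hH).measurable
    exact Measurable.indicator (by fun_prop) (measurableSet_le measurable_fst measurable_snd)
  have hg_le (s : ℝ) : ∫⁻ t in Icc a b, g (s, t) ≤ 1 :=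
    calc ∫⁻ t in Icc a b, g (s, t)
        ≤ ∫⁻ t, g (s, t) := setLIntegral_le_lintegral _ _
      _ = ∫⁻ t in Ici s, ENNReal.ofReal (h t * Real.exp (H s - H t)) :=
          lintegral_indicator measurableSet_Ici _
      _ ≤ 1 := lintegral_Ici_hazard_le_one hH hnonneg s
  have hg_orderStat (u : Fin d → ℝ) : g (orderStat u p, orderStat u q) =
      ENNReal.ofReal (h (orderStat u q) * Real.exp (H (orderStat u p) - H (orderStat u q))) :=
    indicator_of_mem (s := {z : ℝ × ℝ | z.1 ≤ z.2}) (monotone_orderStat u hpq.le) _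
  simp_rw [← hg_orderStat]
  rw [volume_pi, Measure.restrict_pi_pi]
  simpa using lintegral_pi_orderStat_pair_le hpq.ne hgm hg_le

variable {C : Measure (Fin d → ℝ)} [IsProbabilityMeasure C]
  (hC : ∀ᵐ u ∂C, ∀ i, u i ∈ Icc a b)
include hC

lemma lintegral_orderStat_increment_le {p q : Fin d} (hpq : p ≤ q) {H h : ℝ → ℝ}
    (hH : ∀ t, HasDerivAt H (h t) t) (hnonneg : ∀ t, 0 ≤ h t)
    (hD : ∀ t, h t * (cdf1 (multidiag C p) t - cdf1 (multidiag C q) t) ≤ 1) :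
    ∫⁻ u, ENNReal.ofReal (H (orderStat u q) - H (orderStat u p)) ∂C ≤ ENNReal.ofReal (b - a) := by
  have hm : Measurable fun t => ENNReal.ofReal (h t) :=
    (measurable_of_forall_hasDerivAt hH).ennreal_ofReal
  calc ∫⁻ u, ENNReal.ofReal (H (orderStat u q) - H (orderStat u p)) ∂C
      = ∫⁻ u, (∫⁻ t in Ico (orderStat u p) (orderStat u q), ENNReal.ofReal (h t)) ∂C :=
        lintegral_congr fun u =>
          (lintegral_Ico_ofReal_deriv hH hnonneg (monotone_orderStat u hpq)).symm
    _ = ∫⁻ u, (∫⁻ t in Ico (orderStat u p) (orderStat u q), ENNReal.ofReal (h t)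
          ∂(volume.restrict (Icc a b))) ∂C := by
        refine lintegral_congr_ae ?_
        filter_upwards [hC] with u hu
        rw [Measure.restrict_restrict measurableSet_Ico, inter_eq_left.2]
        exact fun t ht => ⟨(hu _).1.trans ht.1, ht.2.le.trans (hu _).2⟩
    _ = ∫⁻ t in Icc a b,
          ENNReal.ofReal (h t) * C {u | t ∈ Ico (orderStat u p) (orderStat u q)} :=
        lintegral_setLIntegral_Ico (measurable_orderStat p) (measurable_orderStat q) hm
    _ ≤ ∫⁻ _ in Icc a b, 1 := by
        refine lintegral_mono fun t => ?_
        rw [← ofReal_measureReal, ← ENNReal.ofReal_mul (hnonneg t), ← cdf1_multidiag_sub hpq]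
        exact ENNReal.ofReal_le_one.2 (hD t)
    _ = ENNReal.ofReal (b - a) := by simp

lemma lintegral_log_rate_multidiag_le (hac : C ≪ volume) {p q : Fin d} (hpq : p < q)
    {h : ℝ → ℝ} (hcont : Continuous h) (hpos : ∀ t, 0 < h t)
    (hD : ∀ t, h t * (cdf1 (multidiag C p) t - cdf1 (multidiag C q) t) ≤ 1) :
    ∫⁻ t, ENNReal.ofReal (Real.log (h t)) ∂(multidiag C q) ≤
      ENNReal.ofReal (b - a) + entropyNegPart C
        + (d * d - d : ℕ) * ENNReal.ofReal (b - a) ^ (d - 1) := by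
  set H : ℝ → ℝ := fun t => ∫ r in (0 : ℝ)..t, h r
  have hH (t : ℝ) : HasDerivAt H (h t) t := (hcont.integral_hasStrictDerivAt 0 t).hasDerivAt
  have hHm : Measurable H := (continuous_of_forall_hasDerivAt hH).measurable
  have hp := measurable_orderStat p
  have hq := measurable_orderStat q
  have hlog : Measurable fun t => Real.log (h t) := Real.measurable_log.comp hcont.measurable
  have hexp (u : Fin d → ℝ) :
      Real.exp (Real.log (h (orderStat u q)) - (H (orderStat u q) - H (orderStat u p))) =
        h (orderStat u q) * Real.exp (H (orderStat u p) - H (orderStat u q)) := by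
    rw [sub_eq_add_neg, neg_sub, Real.exp_add, Real.exp_log (hpos _)]
  calc ∫⁻ t, ENNReal.ofReal (Real.log (h t)) ∂(multidiag C q)
      = ∫⁻ u, ENNReal.ofReal (Real.log (h (orderStat u q))) ∂C :=
        lintegral_map hlog.ennreal_ofReal hq
    _ ≤ ∫⁻ u, ENNReal.ofReal (H (orderStat u q) - H (orderStat u p)) ∂C + entropyNegPart C
          + ∫⁻ u in univ.pi fun _ : Fin d => Icc a b, ENNReal.ofReal (Real.exp
            (Real.log (h (orderStat u q)) - (H (orderStat u q) - H (orderStat u p)))) :=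
        lintegral_ofReal_le_add_entropyNegPart hac
          (MeasurableSet.univ_pi fun _ => measurableSet_Icc)
          (hC.mono fun u hu => mem_univ_pi.2 hu) (hlog.comp hq)
          ((hHm.comp hq).sub (hHm.comp hp))
    _ ≤ _ := by
        simp_rw [hexp]
        gcongr
        · exact lintegral_orderStat_increment_le hC hpq.le hH (fun t => (hpos t).le) hD
        · exact lintegral_cube_hazard_orderStat_le hpq hH fun t => (hpos t).le

lemma lintegral_abs_log_cdf1_sub_le (hac : C ≪ volume) {p q : Fin d} (hpq : p < q) :
    ∫⁻ t, ENNReal.ofReal |Real.log (cdf1 (multidiag C p) t - cdf1 (multidiag C q) t)|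
        ∂(multidiag C q) ≤
      ENNReal.ofReal (b - a) + entropyNegPart C
        + (d * d - d : ℕ) * ENNReal.ofReal (b - a) ^ (d - 1) := by
  have hcont : Continuous fun t => cdf1 (multidiag C p) t - cdf1 (multidiag C q) t :=
    (continuous_cdf1_multidiag hac p).sub (continuous_cdf1_multidiag hac q)
  refine lintegral_abs_log_le_of_forall_max hcont.measurable (fun t => ?_) fun ε hε => ?_
  · rw [cdf1_multidiag_sub hpq.le]
    exact ⟨measureReal_nonneg, measureReal_le_one⟩
  · have hpos (t : ℝ) : 0 < max (cdf1 (multidiag C p) t - cdf1 (multidiag C q) t) ε :=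
      lt_max_of_lt_right hε
    refine lintegral_log_rate_multidiag_le hC hac hpq
      ((hcont.max continuous_const).inv₀ fun t => (hpos t).ne') (fun t => inv_pos.2 (hpos t))
      fun t => ?_
    rw [inv_mul_le_one₀ (hpos t)]
    exact le_max_left _ _

lemma Jfun_multidiag_lt_top [NeZero d] (hac : C ≪ volume) (hfin : entropyNegPart C ≠ ∞) :
    Jfun (multidiag C) < ∞ := by
  rw [Jfun, ENNReal.sum_lt_top]
  intro i _
  split_ifs with hi
  · exact ENNReal.zero_lt_top
  · refine (lintegral_abs_log_cdf1_sub_le hC hac (fin_sub_one_lt_self hi)).trans_lt ?_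
    finiteness

end Cube

lemma IsCopula.ae_forall_mem_Icc {C : Measure (Fin d → ℝ)} (hC : IsCopula C) :
    ∀ᵐ u ∂C, ∀ i, u i ∈ Icc (0 : ℝ) 1 := by
  refine ae_all_iff.2 fun i => ae_of_ae_map (measurable_pi_apply i).aemeasurable ?_
  change ∀ᵐ t ∂(marg C i), t ∈ Icc (0 : ℝ) 1
  rw [hC.2 i]
  exact ae_restrict_mem measurableSet_Icc

theorem stmt_3_general [NeZero d] {a b : ℝ} {C : Measure (Fin d → ℝ)} [IsProbabilityMeasure C]
    (hC : ∀ᵐ u ∂C, ∀ i, u i ∈ Icc a b) (hJ : Jfun (multidiag C) = ∞) :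
    dEntropy C = ⊥ := by
  by_cases hac : C ≪ volume
  · refine dEntropy_eq_bot_of_entropyNegPart_eq_top (by_contra fun hfin => ?_)
    exact (Jfun_multidiag_lt_top hC hac hfin).ne hJ
  · exact if_neg hac

/-- Theorem `theo:spec`, case (a).  Let `δ ∈ D` be the multidiagonal of a
copula on `ℝ^d`.  If `J(δ) = +∞`, then `H(C) = −∞` for every copula `C` with multidiagonal
`δ`, i.e. `max_{C ∈ C_δ} H(C) = −∞`. -/
theorem stmt_3 {d : ℕ} [NeZero d] (δ : Fin d → Measure ℝ) (hδ : IsMultidiag δ)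
    (hJ : Jfun δ = ∞) :
    ∀ C : Measure (Fin d → ℝ), IsCopula C → multidiag C = δ → dEntropy C = ⊥ := by
  rintro C hC rfl
  have := hC.1
  exact stmt_3_general hC.ae_forall_mem_Icc hJ

end MaxEntOS
end
end

section
/- Let 𝐅 = (F_1,…,F_d) be a d-tuple of continuous cdfs on ℝ with F_{i-1} ≥ F_i pointwise for all 2 ≤ i ≤ d. The symmetrizing operator S_𝐅 is a bijection from C^OS(𝐅) onto its image C^sym(𝐅) = S_𝐅(C^OS(𝐅)). -/
/- Formalization framework for "Maximum entropy distribution of order statistics with given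
marginals" (Butucea, Delmas, Dutfoy, Fischer).  One-dimensional cdfs are identified with
(probability) measures on `ℝ`, and cdfs on `ℝ^d` with measures on `Fin d → ℝ`. -/

open MeasureTheory Set
open scoped ENNReal

noncomputable section

namespace MaxEntOS

variable {d : ℕ}

/-!
A finite law `ν` on `ℝ` with cdf `F`, with or without atoms, charges all the intervals `(s, x]` for
`ν`-almost every `x`, so that `F s < F x` for all `s < x` and `F⁻¹ (F x) = x`. Hence a law on `ℝ^d`
is the joint law built from its marginals and its copula.

If `C` is the copula of an ordered law `μ` with marginals `F`, then `S_F(C)` is therefore the copula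
of the symmetrization of `μ`. The marginals of the symmetrization depend on `F` only, so `S_F(C)`
determines the symmetrization of `μ`.

Finally an ordered law is recovered from its symmetrization: both give the same mass to
permutation-invariant sets, and every set of monotone vectors is the trace on the monotone vectors
of an invariant set, because two monotone rearrangements of a vector coincide.
-/

lemma measurable_sInf_of_antitone {α : Type*} [LinearOrder α] [TopologicalSpace α]
    [OrderTopology α] [MeasurableSpace α] [BorelSpace α] {S : α → Set ℝ} (hS : Antitone S) :
    Measurable fun t => sInf (S t) := by
  set T : Set α := {t | (S t).Nonempty ∧ BddBelow (S t)}
  have hT : T.OrdConnected := ⟨fun _ ha _ hb _ hc =>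
    ⟨hb.1.mono (hS hc.2), ha.2.mono (hS hc.1)⟩⟩
  refine measurable_of_restrict_of_restrict_compl hT.measurableSet ?_ ?_
  · exact Monotone.measurable fun a b hab => csInf_le_csInf a.2.2 b.2.1 (hS hab)
  · -- Off `T` the infimum takes the junk value `0`.
    convert measurable_const (a := (0 : ℝ)) using 1
    funext ⟨t, ht⟩
    rcases (S t).eq_empty_or_nonempty with hempty | hne
    · simp only [domRestrict_apply, hempty, Real.sInf_empty]
    · exact Real.sInf_of_not_bddBelow fun hbdd => ht ⟨hne, hbdd⟩

section LinearOrder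

variable {α : Type*} [LinearOrder α] [TopologicalSpace α] [OrderTopology α]
  [SecondCountableTopology α] [MeasurableSpace α]

lemma measure_null_of_inter_Iic (ν : Measure α) {s : Set α} (h : ∀ x ∈ s, ν (s ∩ Iic x) = 0) :
    ν s = 0 := by
  refine measure_null_of_locally_null s fun x hx => ?_
  by_cases hmax : ∃ y ∈ s, x < y
  · obtain ⟨y, hy, hxy⟩ := hmax
    exact ⟨s ∩ Iic y, inter_mem_nhdsWithin s (Iic_mem_nhds hxy), h y hy⟩
  · push Not at hmax
    exact ⟨s ∩ Iic x, Filter.inter_mem self_mem_nhdsWithin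
      (Filter.mem_of_superset self_mem_nhdsWithin hmax), h x hx⟩

lemma ae_forall_lt_measure_Ioc_ne_zero [DenselyOrdered α] (ν : Measure α) :
    ∀ᵐ x ∂ν, ∀ s < x, ν (Ioc s x) ≠ 0 := by
  obtain ⟨D, hD_countable, hD_dense⟩ := TopologicalSpace.exists_countable_dense α
  let E (r : α) : Set α := {x | r < x ∧ ν (Ioc r x) = 0}
  have hE (r : α) : ν (E r) = 0 :=
    measure_null_of_inter_Iic ν fun x hx =>
      measure_mono_null (t := Ioc r x) (fun _ hy => ⟨hy.1.1, hy.2⟩) hx.2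
  have hD : ∀ᵐ x ∂ν, ∀ r ∈ D, x ∉ E r :=
    (ae_ball_iff hD_countable).2 fun r _ => measure_eq_zero_iff_ae_notMem.1 (hE r)
  filter_upwards [hD] with x hx s hsx hnull
  obtain ⟨r, hr, hsr, hrx⟩ := hD_dense.exists_between hsx
  exact hx r hr ⟨hrx, measure_mono_null (Ioc_subset_Ioc_left hsr.le) hnull⟩

end LinearOrder

section Quantile

variable (ν : Measure ℝ)

lemma measurable_qReal : Measurable (qReal ν) :=
  measurable_sInf_of_antitone fun _ _ hab _ hs => hab.trans hs

variable [IsFiniteMeasure ν]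

lemma monotone_cdf1 : Monotone (cdf1 ν) :=
  fun _ _ hst => measureReal_mono (Iic_subset_Iic.2 hst)

variable {ν} in
lemma cdf1_lt_cdf1 {s t : ℝ} (hst : ν (Ioc s t) ≠ 0) : cdf1 ν s < cdf1 ν t := by
  have hle : s ≤ t := (nonempty_Ioc.1 (nonempty_of_measure_ne_zero hst)).le
  have hsum : cdf1 ν t = cdf1 ν s + ν.real (Ioc s t) := by
    change ν.real (Iic t) = ν.real (Iic s) + ν.real (Ioc s t)
    rw [← Iic_union_Ioc_eq_Iic hle,
      measureReal_union (Iic_disjoint_Ioc le_rfl) measurableSet_Ioc]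
  have hpos : 0 < ν.real (Ioc s t) := ENNReal.toReal_pos hst (measure_ne_top ν _)
  linarith

lemma ae_qReal_cdf1 : ∀ᵐ x ∂ν, qReal ν (cdf1 ν x) = x := by
  filter_upwards [ae_forall_lt_measure_Ioc_ne_zero ν] with x hx
  have hleast : IsLeast {s | cdf1 ν x ≤ cdf1 ν s} x :=
    ⟨le_refl (cdf1 ν x), fun s hs => not_lt.1 fun hsx => (cdf1_lt_cdf1 (hx s hsx)).not_ge hs⟩
  exact hleast.csInf_eq

end Quantile

section Copula

instance isFiniteMeasure_marg (ν : Measure (Fin d → ℝ)) [IsFiniteMeasure ν] (i : Fin d) :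
    IsFiniteMeasure (marg ν i) :=
  Measure.isFiniteMeasure_map ν _

lemma joinCopula_copulaOf (ν : Measure (Fin d → ℝ)) [IsFiniteMeasure ν] :
    joinCopula (marg ν) (copulaOf ν) = ν := by
  have hcdf : Measurable fun (x : Fin d → ℝ) i => cdf1 (marg ν i) (x i) :=
    measurable_pi_lambda _ fun i => (monotone_cdf1 _).measurable.comp (measurable_pi_apply i)
  have hquantile : Measurable fun (u : Fin d → ℝ) i => qReal (marg ν i) (u i) :=
    measurable_pi_lambda _ fun i => (measurable_qReal _).comp (measurable_pi_apply i)
  have hinv : ∀ᵐ x ∂ν, ∀ i, qReal (marg ν i) (cdf1 (marg ν i) (x i)) = x i :=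
    ae_all_iff.2 fun i =>
      ae_of_ae_map (measurable_pi_apply i).aemeasurable (ae_qReal_cdf1 (marg ν i))
  calc joinCopula (marg ν) (copulaOf ν)
      = ν.map fun x i => qReal (marg ν i) (cdf1 (marg ν i) (x i)) :=
        Measure.map_map hquantile hcdf
    _ = ν.map id := Measure.map_congr (hinv.mono fun _ hx => funext hx)
    _ = ν := Measure.map_id

lemma eq_of_marg_eq_of_copulaOf_eq {μ ν : Measure (Fin d → ℝ)} [IsFiniteMeasure μ]
    [IsFiniteMeasure ν] (hmarg : marg μ = marg ν) (hcopula : copulaOf μ = copulaOf ν) :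
    μ = ν := by
  rw [← joinCopula_copulaOf μ, ← joinCopula_copulaOf ν, hmarg, hcopula]

lemma SF_marg_copulaOf (μ : Measure (Fin d → ℝ)) [IsFiniteMeasure μ] :
    SF (marg μ) (copulaOf μ) = copulaOf (symmetrize μ) := by
  rw [SF, joinCopula_copulaOf]

end Copula

section Permutation

variable {ι α : Type*}

/-- The union of the orbits of the points of `A` under permutation of coordinates, that is, the
smallest permutation-invariant set containing `A`. On such sets, if measurable, a law and its
symmetrization agree. -/
def permSaturation (A : Set (ι → α)) : Set (ι → α) :=
  ⋃ π : Equiv.Perm ι, (fun x => x ∘ π) ⁻¹' A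

lemma mem_permSaturation {A : Set (ι → α)} {x : ι → α} :
    x ∈ permSaturation A ↔ ∃ π : Equiv.Perm ι, x ∘ π ∈ A :=
  mem_iUnion

lemma preimage_comp_perm_permSaturation (σ : Equiv.Perm ι) (A : Set (ι → α)) :
    (fun x => x ∘ σ) ⁻¹' permSaturation A = permSaturation A := by
  ext x
  simp only [mem_preimage, mem_permSaturation]
  exact (Equiv.mulLeft σ).exists_congr fun _ => Iff.rfl

lemma measurable_comp_perm [MeasurableSpace α] (π : Equiv.Perm ι) :
    Measurable fun x : ι → α => x ∘ π :=
  measurable_pi_lambda _ fun i => measurable_pi_apply (π i)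

lemma measurableSet_permSaturation [Finite ι] [MeasurableSpace α] {A : Set (ι → α)}
    (hA : MeasurableSet A) : MeasurableSet (permSaturation A) :=
  MeasurableSet.iUnion fun π => measurable_comp_perm π hA

lemma mem_permSaturation_inter_monotone_iff [PartialOrder α] {A : Set (Fin d → α)}
    {x : Fin d → α} (hx : Monotone x) :
    x ∈ permSaturation (A ∩ {y | Monotone y}) ↔ x ∈ A := by
  rw [mem_permSaturation]
  refine ⟨fun ⟨π, hπA, hπ⟩ => ?_, fun hxA => ⟨1, hxA, hx⟩⟩
  have hcomp : x ∘ π = x := Tuple.unique_monotone (τ := 1) hπ hx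
  rwa [hcomp] at hπA

end Permutation

section Symmetrize

variable {μ ν : Measure (Fin d → ℝ)}

instance isFiniteMeasure_symmetrize [IsFiniteMeasure μ] : IsFiniteMeasure (symmetrize μ) :=
  Measure.smul_finite _ (ENNReal.inv_ne_top.2 (Nat.cast_ne_zero.2 d.factorial_ne_zero))

lemma marg_symmetrize (μ : Measure (Fin d → ℝ)) (i : Fin d) :
    marg (symmetrize μ) i =
      (d.factorial : ℝ≥0∞)⁻¹ • ∑ π : Equiv.Perm (Fin d), marg μ (π i) := by
  rw [marg, symmetrize, Measure.map_smul,
    Measure.map_finset_sum' (measurable_pi_apply i).aemeasurable]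
  congr! 2 with π
  exact Measure.map_map (measurable_pi_apply i) (measurable_comp_perm π)

lemma symmetrize_apply_of_perm_invariant (μ : Measure (Fin d → ℝ)) {T : Set (Fin d → ℝ)}
    (hT : MeasurableSet T) (hinv : ∀ π : Equiv.Perm (Fin d), (fun x => x ∘ π) ⁻¹' T = T) :
    symmetrize μ T = μ T := by
  have hmap (π : Equiv.Perm (Fin d)) : μ.map (fun x => fun i => x (π i)) T = μ T :=
    (Measure.map_apply (measurable_comp_perm π) hT).trans (congrArg μ (hinv π))
  simp only [symmetrize, Measure.smul_apply, Measure.finsetSum_apply, hmap, Finset.sum_const,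
    Finset.card_univ, Fintype.card_perm, Fintype.card_fin, nsmul_eq_mul, smul_eq_mul]
  exact ENNReal.inv_mul_cancel_left (Nat.cast_ne_zero.2 d.factorial_ne_zero)
    (ENNReal.natCast_ne_top _)

lemma symmetrize_permSaturation_inter_monotone (hμ : ∀ᵐ x ∂μ, Monotone x)
    {A : Set (Fin d → ℝ)} (hA : MeasurableSet A) :
    symmetrize μ (permSaturation (A ∩ {x | Monotone x})) = μ A := by
  have hsat := measurableSet_permSaturation (hA.inter isClosed_monotone.measurableSet)
  rw [symmetrize_apply_of_perm_invariant μ hsat fun π => preimage_comp_perm_permSaturation π _]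
  exact measure_congr (hμ.mono fun _ hx => propext (mem_permSaturation_inter_monotone_iff hx))

lemma eq_of_symmetrize_eq (hμ : ∀ᵐ x ∂μ, Monotone x) (hν : ∀ᵐ x ∂ν, Monotone x)
    (h : symmetrize μ = symmetrize ν) : μ = ν := by
  ext A hA
  rw [← symmetrize_permSaturation_inter_monotone hμ hA, h,
    symmetrize_permSaturation_inter_monotone hν hA]

end Symmetrize

lemma IsCdfOS.ae_monotone {F : Fin d → Measure ℝ} {μ : Measure (Fin d → ℝ)} (h : IsCdfOS F μ) :
    ∀ᵐ x ∂μ, Monotone x :=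
  have := h.1
  (mem_ae_iff_prob_eq_one isClosed_monotone.measurableSet).2 h.2.1

theorem stmt_7_general (F : Fin d → Measure ℝ) : Set.InjOn (SF F) (copulaOS F) := by
  rintro _ ⟨μ, hμ, rfl⟩ _ ⟨ν, hν, rfl⟩ hSF
  have := hμ.1
  have := hν.1
  have hμF : marg μ = F := funext hμ.2.2
  have hνF : marg ν = F := funext hν.2.2
  have hmarg : marg (symmetrize μ) = marg (symmetrize ν) := by
    funext i
    rw [marg_symmetrize, marg_symmetrize, hμF, hνF]
  have hcopula : copulaOf (symmetrize μ) = copulaOf (symmetrize ν) := by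
    rw [← SF_marg_copulaOf, ← SF_marg_copulaOf, hμF, hνF, hSF]
  have hsymm : symmetrize μ = symmetrize ν := eq_of_marg_eq_of_copulaOf_eq hmarg hcopula
  rw [eq_of_symmetrize_eq hμ.ae_monotone hν.ae_monotone hsymm]

/-- Lemma `lem:one_to_one`.  Let `F = (F_1, …, F_d)` be a `d`-tuple of
continuous cdfs on `ℝ` with `F_{i-1} ≥ F_i` pointwise.  The symmetrizing operator `S_F` is a
bijection from `C^OS(F)` onto its image `C^sym(F) = S_F(C^OS(F))`, i.e. it is injective on
`C^OS(F)`. -/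
theorem stmt_7 {d : ℕ} [NeZero d] (F : Fin d → Measure ℝ) (hF : IsMargOS F) :
    Set.InjOn (SF F) (copulaOS F) :=
  stmt_7_general F

end MaxEntOS
end
end
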